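/- arXiv:1702.01694 — 3 statements merged into one kernel-verified Lean document; each statement's English description precedes it below -/
import Mathlib

section
/- Write f_i = U_{i,0}·x₄^{d_i} + x₄^{d_i−1}·(U_{i,1}x₁ + U_{i,2}x₂ + U_{i,3}x₃) + h_i (i = 1,2), where U_{i,0},…,U_{i,3} are the coefficient indeterminates of the monomials x₄^{d_i} and x₄^{d_i−1}xⱼ, and h_i collects the remaining terms of f_i. Let 𝕌_{r,s} := U_{1,r}U_{2,s} − U_{1,s}U_{2,r} for 1 ≤ r < s ≤ 3. Then there is a ring isomorphism between C_{x₄}/(J_{1,2}, J_{1,3}, J_{2,3})·C_{x₄} and C_{x₄}/(𝕌_{1,2}, 𝕌_{1,3}, 𝕌_{2,3})·C_{x₄}. -/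
set_option maxSynthPendingDepth 3

open MvPolynomial

/-- Index type for the coefficient indeterminates `U_{i,α}`, `i ∈ {1,2}`,
`α` an exponent vector in four variables with `|α| = d i`. -/
def CoefIdx (d : Fin 2 → ℕ) : Type :=
  Σ i : Fin 2, {α : Fin 4 →₀ ℕ // (α.sum fun _ e => e) = d i}

/-- The universal ring of coefficients `A = k[U_{i,α}]`. -/
abbrev Aring (k : Type*) [CommRing k] (d : Fin 2 → ℕ) : Type _ :=
  MvPolynomial (CoefIdx d) k

/-- The polynomial ring `C = A[x₁,x₂,x₃,x₄]`. -/
abbrev Cring (k : Type*) [CommRing k] (d : Fin 2 → ℕ) : Type _ :=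
  MvPolynomial (Fin 4) (Aring k d)

/-- The generic homogeneous polynomial `f_i = Σ_{|α| = d i} U_{i,α} x^α` of degree `d i`. -/
noncomputable def genF (k : Type*) [CommRing k] (d : Fin 2 → ℕ) (i : Fin 2) : Cring k d :=
  ∑ α ∈ (Finset.finsuppAntidiag (Finset.univ : Finset (Fin 4)) (d i)).attach,
    monomial α.1 (X (⟨i, ⟨α.1, (Finset.mem_finsuppAntidiag'.mp α.2).1⟩⟩ : CoefIdx d))

/-- The 2-minors `J_{r,s} = ∂ᵣf₁·∂ₛf₂ − ∂ₛf₁·∂ᵣf₂` of the Jacobian matrix of `(f₁,f₂)`. -/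
noncomputable def Jmin (k : Type*) [CommRing k] (d : Fin 2 → ℕ) (r s : Fin 4) : Cring k d :=
  pderiv r (genF k d 0) * pderiv s (genF k d 1) -
    pderiv s (genF k d 0) * pderiv r (genF k d 1)

/-- The coefficient indeterminate `U_{i,j}` of the monomial `x₄^{d_i − 1}·x_j` in `f_i`,
for `j ∈ {1,2,3}` (indexed by `Fin 3`, embedded in `Fin 4` via `castSucc`). -/
noncomputable def Uvar (k : Type*) [CommRing k] (d : Fin 2 → ℕ) (hd : ∀ i, 0 < d i)
    (i : Fin 2) (j : Fin 3) : Aring k d :=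
  X (⟨i, ⟨Finsupp.single (Fin.castSucc j) 1 + Finsupp.single (3 : Fin 4) (d i - 1), by
    rw [Finsupp.sum_add_index' (fun a => rfl) (fun a b₁ b₂ => rfl),
      Finsupp.sum_single_index rfl, Finsupp.sum_single_index rfl]
    have := hd i; omega⟩⟩ : CoefIdx d)

/-- The 2-minor `𝕌_{r,s} = U_{1,r}·U_{2,s} − U_{1,s}·U_{2,r}` of the matrix `𝕌`. -/
noncomputable def Umin (k : Type*) [CommRing k] (d : Fin 2 → ℕ) (hd : ∀ i, 0 < d i)
    (r s : Fin 3) : Aring k d :=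
  Uvar k d hd 0 r * Uvar k d hd 1 s - Uvar k d hd 0 s * Uvar k d hd 1 r

/-- The index of the special coefficient `U_{i,j}`. -/
noncomputable def specIdx (d : Fin 2 → ℕ) (hd : ∀ i, 0 < d i) (p : Fin 2 × Fin 3) : CoefIdx d :=
  ⟨p.1, ⟨Finsupp.single (Fin.castSucc p.2) 1 + Finsupp.single (3 : Fin 4) (d p.1 - 1), by
    rw [Finsupp.sum_add_index' (fun a => rfl) (fun a b₁ b₂ => rfl),
      Finsupp.sum_single_index rfl, Finsupp.sum_single_index rfl]
    have := hd p.1; omega⟩⟩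

theorem Uvar_eq (k : Type*) [CommRing k] (d : Fin 2 → ℕ) (hd : ∀ i, 0 < d i)
    (i : Fin 2) (j : Fin 3) : Uvar k d hd i j = X (specIdx d hd (i, j)) := rfl

theorem spec_apply (n : ℕ) (j l : Fin 3) :
    (Finsupp.single (Fin.castSucc j) 1 + Finsupp.single (3 : Fin 4) n : Fin 4 →₀ ℕ)
      (Fin.castSucc l) = if j = l then 1 else 0 := by
  fin_cases j <;> fin_cases l <;> simp [Finsupp.single_apply]

theorem specIdx_injective (d : Fin 2 → ℕ) (hd : ∀ i, 0 < d i) :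
    Function.Injective (specIdx d hd) := by
  rintro ⟨i, j⟩ ⟨i', j'⟩ h
  have h1 : i = i' := congrArg (fun c : CoefIdx d => c.1) h
  subst h1
  have h2 := congrArg (fun c : CoefIdx d => c.2.1 (Fin.castSucc j)) h
  simp only [specIdx, spec_apply] at h2
  have : j' = j := by by_contra hne; simp [hne] at h2
  rw [this]

/-- The summand of `∂_j f_i` coming from the exponent vector `α`. -/
noncomputable def term (k : Type*) [CommRing k] (d : Fin 2 → ℕ) (p : Fin 2 × Fin 3)
    (α : {α // α ∈ Finset.finsuppAntidiag (Finset.univ : Finset (Fin 4)) (d p.1)}) : Cring k d :=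
  pderiv (Fin.castSucc p.2) (monomial α.1
    (X (⟨p.1, ⟨α.1, (Finset.mem_finsuppAntidiag'.mp α.2).1⟩⟩ : CoefIdx d)))

/-- The special exponent vector. -/
noncomputable def specMem (d : Fin 2 → ℕ) (hd : ∀ i, 0 < d i) (p : Fin 2 × Fin 3) :
    {α // α ∈ Finset.finsuppAntidiag (Finset.univ : Finset (Fin 4)) (d p.1)} :=
  ⟨(specIdx d hd p).2.1, Finset.mem_finsuppAntidiag'.mpr ⟨(specIdx d hd p).2.2, by simp⟩⟩

/-- `∂_j h_i`. -/
noncomputable def Hpart (k : Type*) [CommRing k] (d : Fin 2 → ℕ) (hd : ∀ i, 0 < d i)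
    (p : Fin 2 × Fin 3) : Cring k d :=
  ∑ α ∈ (Finset.finsuppAntidiag (Finset.univ : Finset (Fin 4)) (d p.1)).attach.erase
    (specMem d hd p), term k d p α

theorem pderiv_genF (k : Type*) [CommRing k] (d : Fin 2 → ℕ) (hd : ∀ i, 0 < d i)
    (p : Fin 2 × Fin 3) :
    pderiv (Fin.castSucc p.2) (genF k d p.1) =
      X 3 ^ (d p.1 - 1) * C (X (specIdx d hd p)) + Hpart k d hd p := by
  have h1 : pderiv (Fin.castSucc p.2) (genF k d p.1) =
      ∑ α ∈ (Finset.finsuppAntidiag (Finset.univ : Finset (Fin 4)) (d p.1)).attach,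
        term k d p α := by
    rw [genF, map_sum]; rfl
  have h2 : term k d p (specMem d hd p) = X 3 ^ (d p.1 - 1) * C (X (specIdx d hd p)) := by
    have h3 : term k d p (specMem d hd p) = pderiv (Fin.castSucc p.2)
      (monomial (Finsupp.single (Fin.castSucc p.2) 1 + Finsupp.single (3 : Fin 4) (d p.1 - 1))
        (X (specIdx d hd p))) := rfl
    rw [h3, pderiv_monomial, spec_apply, add_tsub_cancel_left]
    rw [X_pow_eq_monomial, mul_comm (monomial _ _) (C _), C_mul_monomial]
    simp
  rw [h1, Hpart, ← h2, Finset.add_sum_erase _ _ (Finset.mem_attach _ _)]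

section
variable {k : Type*} [CommRing k] {d : Fin 2 → ℕ}

/-- A ring hom out of `C` fixing constants, the `x_m` and the non-special coefficients
fixes `∂_j h_i`. -/
theorem hom_Hpart {L : Type*} [CommRing L] (hd : ∀ i, 0 < d i) (a b : Cring k d →+* L)
    (hx : ∀ m, a (X m) = b (X m))
    (hU : ∀ c, (¬ ∃ p, specIdx d hd p = c) → a (C (X c)) = b (C (X c))) (p : Fin 2 × Fin 3) :
    a (Hpart k d hd p) = b (Hpart k d hd p) := by
  rw [Hpart, map_sum, map_sum]
  refine Finset.sum_congr rfl fun α hα => ?_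
  have hne := (Finset.mem_erase.mp hα).1
  obtain ⟨i, j⟩ := p
  by_cases hc : ∃ q, specIdx d hd q =
      (⟨i, ⟨α.1, (Finset.mem_finsuppAntidiag'.mp α.2).1⟩⟩ : CoefIdx d)
  · obtain ⟨⟨i', l⟩, hq⟩ := hc
    have h1 : i' = i := congrArg (fun c : CoefIdx d => c.1) hq
    subst h1
    have h2 : (specIdx d hd (i', l)).2.1 = α.1 := by rw [hq]
    have hlj : l ≠ j := by
      rintro rfl
      exact hne (Subtype.ext h2.symm)
    have h0 : α.1 (Fin.castSucc j) = 0 := by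
      rw [← h2]
      simp only [specIdx, spec_apply]
      simp [hlj]
    have : term k d (i', j) α = 0 := by
      simp only [term, pderiv_monomial, h0]
      simp
    rw [this, map_zero, map_zero]
  · have := hU _ hc
    simp only [term, pderiv_monomial]
    rw [monomial_eq, Finsupp.prod_fintype _ _ (by simp)]
    simp only [map_mul, map_prod, map_pow, hx, this, map_natCast]

/-- Substitution endomorphism of the localization. -/
theorem exists_subst (hd : ∀ i, 0 < d i)
    (F : Fin 2 × Fin 3 → Localization.Away (X 3 : Cring k d)) :
    ∃ S : Localization.Away (X 3 : Cring k d) →+* Localization.Away (X 3 : Cring k d),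
      (∀ r, S (algebraMap (Cring k d) _ (C (C r))) = algebraMap (Cring k d) _ (C (C r))) ∧
      (∀ m, S (algebraMap (Cring k d) _ (X m)) = algebraMap (Cring k d) _ (X m)) ∧
      (∀ c, (¬ ∃ p, specIdx d hd p = c) →
        S (algebraMap (Cring k d) _ (C (X c))) = algebraMap (Cring k d) _ (C (X c))) ∧
      (∀ p, S (algebraMap (Cring k d) _ (C (X (specIdx d hd p)))) = F p) := by
  let a := algebraMap (Cring k d) (Localization.Away (X 3 : Cring k d))
  let g : Cring k d →+* Localization.Away (X 3 : Cring k d) :=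
    eval₂Hom (eval₂Hom (a.comp (C.comp C))
      (Function.extend (specIdx d hd) F (fun c => a (C (X c))))) (fun m => a (X m))
  have hg : IsUnit (g (X 3)) := by
    have : g (X 3) = a (X 3) := by simp [g]
    rw [this]
    exact IsLocalization.Away.algebraMap_isUnit _
  refine ⟨IsLocalization.Away.lift (X 3 : Cring k d) hg, fun r => ?_, fun m => ?_,
    fun c hc => ?_, fun p => ?_⟩ <;> rw [IsLocalization.Away.lift_eq]
  · simp [g, a]
  · simp [g, a]
  · simp [g, a, Function.extend_apply' _ _ _ hc]
  · simp [g, (specIdx_injective d hd).extend_apply]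

theorem loc_hom_ext (hd : ∀ i, 0 < d i)
    (S : Localization.Away (X 3 : Cring k d) →+* Localization.Away (X 3 : Cring k d))
    (h1 : ∀ r, S (algebraMap (Cring k d) _ (C (C r))) = algebraMap (Cring k d) _ (C (C r)))
    (h2 : ∀ m, S (algebraMap (Cring k d) _ (X m)) = algebraMap (Cring k d) _ (X m))
    (h3 : ∀ c, (¬ ∃ p, specIdx d hd p = c) →
        S (algebraMap (Cring k d) _ (C (X c))) = algebraMap (Cring k d) _ (C (X c)))
    (h4 : ∀ p, S (algebraMap (Cring k d) _ (C (X (specIdx d hd p)))) =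
      algebraMap (Cring k d) _ (C (X (specIdx d hd p)))) : S = RingHom.id _ := by
  apply IsLocalization.ringHom_ext (Submonoid.powers (X 3 : Cring k d))
  apply MvPolynomial.ringHom_ext
  · intro q
    have : (S.comp (algebraMap (Cring k d) _)).comp C =
        ((RingHom.id _).comp (algebraMap (Cring k d)
          (Localization.Away (X 3 : Cring k d)))).comp C := by
      apply MvPolynomial.ringHom_ext
      · intro r; exact h1 r
      · intro c
        by_cases hc : ∃ p, specIdx d hd p = c
        · obtain ⟨p, rfl⟩ := hc
          exact h4 p
        · exact h3 c hc
    exact congrArg (fun f => f q) this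
  · intro m; exact h2 m

theorem exists_equiv (hd : ∀ i, 0 < d i) :
    ∃ S : Localization.Away (X 3 : Cring k d) ≃+* Localization.Away (X 3 : Cring k d),
      ∀ (i : Fin 2) (j : Fin 3),
        S (algebraMap (Cring k d) _ (pderiv (Fin.castSucc j) (genF k d i))) =
          algebraMap (Cring k d) _ (C (Uvar k d hd i j)) := by
  let a := algebraMap (Cring k d) (Localization.Away (X 3 : Cring k d))
  obtain ⟨v, hv⟩ : ∃ v, a (X 3) * v = 1 :=
    (IsLocalization.Away.algebraMap_isUnit (X 3 : Cring k d)).exists_right_inv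
  have hvn : ∀ n, a (X 3) ^ n * v ^ n = 1 := fun n => by rw [← mul_pow, hv, one_pow]
  obtain ⟨ψ, ψ1, ψ2, ψ3, ψ4⟩ := exists_subst hd (fun p =>
    a (X 3) ^ (d p.1 - 1) * a (C (X (specIdx d hd p))) + a (Hpart k d hd p))
  obtain ⟨φ, φ1, φ2, φ3, φ4⟩ := exists_subst hd (fun p =>
    v ^ (d p.1 - 1) * (a (C (X (specIdx d hd p))) - a (Hpart k d hd p)))
  have φH : ∀ p, φ (a (Hpart k d hd p)) = a (Hpart k d hd p) :=
    fun p => hom_Hpart hd (φ.comp a) a φ2 φ3 p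
  have ψH : ∀ p, ψ (a (Hpart k d hd p)) = a (Hpart k d hd p) :=
    fun p => hom_Hpart hd (ψ.comp a) a ψ2 ψ3 p
  have ψv : ψ v = v := by
    have h : a (X 3) * ψ v = 1 := by
      have := congrArg ψ hv
      rwa [map_mul, map_one, ψ2] at this
    linear_combination v * h - ψ v * hv
  have key : ∀ p, φ (a (X 3) ^ (d p.1 - 1) * a (C (X (specIdx d hd p))) + a (Hpart k d hd p)) =
      a (C (X (specIdx d hd p))) := by
    intro p
    rw [map_add, map_mul, map_pow, φH, φ4, φ2]
    linear_combination (a (C (X (specIdx d hd p))) - a (Hpart k d hd p)) * hvn (d p.1 - 1)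
  have e1 : φ.comp ψ = RingHom.id _ := by
    apply loc_hom_ext hd
    · intro r; rw [RingHom.comp_apply, ψ1, φ1]
    · intro r; rw [RingHom.comp_apply, ψ2, φ2]
    · intro c hc; rw [RingHom.comp_apply, ψ3 c hc, φ3 c hc]
    · intro p; rw [RingHom.comp_apply, ψ4]; exact key p
  have e2 : ψ.comp φ = RingHom.id _ := by
    apply loc_hom_ext hd
    · intro r; rw [RingHom.comp_apply, φ1, ψ1]
    · intro r; rw [RingHom.comp_apply, φ2, ψ2]
    · intro c hc; rw [RingHom.comp_apply, φ3 c hc, ψ3 c hc]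
    · intro p
      rw [RingHom.comp_apply, φ4, map_mul, map_sub, map_pow, ψH, ψ4, ψv]
      linear_combination a (C (X (specIdx d hd p))) * hvn (d p.1 - 1)
  refine ⟨RingEquiv.ofRingHom φ ψ e1 e2, fun i j => ?_⟩
  have := key (i, j)
  rw [← map_pow, ← map_mul, ← map_add, ← pderiv_genF] at this
  exact this

end

/-- **Lemma.** There is a ring isomorphism between
`C_{x₄}/(J_{1,2}, J_{1,3}, J_{2,3})·C_{x₄}` and `C_{x₄}/(𝕌_{1,2}, 𝕌_{1,3}, 𝕌_{2,3})·C_{x₄}`,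
where the `J_{r,s}` are the Jacobian minors not involving `∂₄` and the `𝕌_{r,s}` are the
2-minors of the matrix of coefficients `U_{i,j}` of the monomials `x₄^{d_i−1}·x_j`. -/
theorem quotient_Jmin_ringEquiv_quotient_Umin (k : Type*) [CommRing k] (d : Fin 2 → ℕ)
    (hd : ∀ i, 0 < d i) :
    Nonempty
      ((Localization.Away (X 3 : Cring k d) ⧸
          Ideal.span ((algebraMap (Cring k d) (Localization.Away (X 3 : Cring k d))) ''
            {p | ∃ r s : Fin 4, r < s ∧ r ≠ 3 ∧ s ≠ 3 ∧ p = Jmin k d r s})) ≃+*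
        (Localization.Away (X 3 : Cring k d) ⧸
          Ideal.span ((algebraMap (Cring k d) (Localization.Away (X 3 : Cring k d))) ''
            {p | ∃ r s : Fin 3, r < s ∧ p = C (Umin k d hd r s)}))) := by
  obtain ⟨S, hS⟩ := exists_equiv (k := k) hd
  have hJ : ∀ r s : Fin 3, S (algebraMap (Cring k d) _ (Jmin k d r.castSucc s.castSucc)) =
      algebraMap (Cring k d) _ (C (Umin k d hd r s)) := by
    intro r s
    simp only [Jmin, Umin, map_sub, map_mul, hS]
  refine ⟨Ideal.quotientEquiv _ _ S ?_⟩
  rw [Ideal.map_span]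
  congr 1
  ext y
  constructor
  · rintro ⟨_, ⟨r, s, hrs, rfl⟩, rfl⟩
    refine ⟨_, ⟨_, ⟨r.castSucc, s.castSucc, hrs, ?_, ?_, rfl⟩, rfl⟩, hJ r s⟩
    · exact (Fin.castSucc_lt_last r).ne
    · exact (Fin.castSucc_lt_last s).ne
  · rintro ⟨_, ⟨_, ⟨r, s, hrs, hr, hs, rfl⟩, rfl⟩, rfl⟩
    obtain ⟨r, rfl⟩ := Fin.exists_castSucc_eq.mpr hr
    obtain ⟨s, rfl⟩ := Fin.exists_castSucc_eq.mpr hs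
    exact ⟨_, ⟨r, s, hrs, rfl⟩, (hJ r s).symm⟩
end

section
/- Assume k is an integral domain. Then for all i ≠ j in {1,2,3,4}, the image of x_i in the localization B_{x_j} is not a zero divisor; consequently the canonical map B_{x_j} → B_{x_i x_j} is injective. -/
set_option maxSynthPendingDepth 3

open MvPolynomial

/-- The ideal `𝒟 = (f₁, f₂) + (J_{r,s} : r < s) ⊂ C`. -/
noncomputable def Dideal (k : Type*) [CommRing k] (d : Fin 2 → ℕ) : Ideal (Cring k d) :=
  Ideal.span ({genF k d 0, genF k d 1} ∪ {p | ∃ r s : Fin 4, r < s ∧ p = Jmin k d r s})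


namespace XNZD

/-- The value of the monomial `x^α`. -/
noncomputable def mon {E : Type*} [CommRing E] (x : Fin 4 → E) (α : Fin 4 →₀ ℕ) : E :=
  ∏ r, x r ^ α r

/-- Exponents of degree `n`. -/
noncomputable def Dg (n : ℕ) : Finset (Fin 4 →₀ ℕ) :=
  Finset.finsuppAntidiag (Finset.univ : Finset (Fin 4)) n

/-- Value of the form with coefficients `w`. -/
noncomputable def FF {E : Type*} [CommRing E] (n : ℕ) (x : Fin 4 → E) (w : (Fin 4 →₀ ℕ) → E) : E :=
  ∑ α ∈ Dg n, w α * mon x α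

/-- Value of the partial derivative of the form with coefficients `w`. -/
noncomputable def GG {E : Type*} [CommRing E] (n : ℕ) (x : Fin 4 → E) (w : (Fin 4 →₀ ℕ) → E)
    (r : Fin 4) : E :=
  ∑ α ∈ Dg n, w α * (α r : E) * mon x (α - Finsupp.single r 1)

/-- The exponent `(n-1) e_j + e_r`. -/
noncomputable def lin (j : Fin 4) (n : ℕ) (r : Fin 4) : Fin 4 →₀ ℕ :=
  Finsupp.single j (n - 1) + Finsupp.single r 1

theorem lin_inj (j : Fin 4) (n : ℕ) : Function.Injective (lin j n) := by
  intro r s h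
  have h' : Finsupp.single r (1 : ℕ) = Finsupp.single s 1 := add_left_cancel h
  exact Finsupp.single_left_injective one_ne_zero h'

theorem mem_Dg {n : ℕ} {α : Fin 4 →₀ ℕ} : α ∈ Dg n ↔ (α.sum fun _ e => e) = n := by
  unfold Dg
  rw [Finset.mem_finsuppAntidiag']
  simp

theorem mem_Dg' {n : ℕ} {α : Fin 4 →₀ ℕ} : α ∈ Dg n ↔ ∑ r, α r = n := by
  unfold Dg
  rw [Finset.mem_finsuppAntidiag]
  simp

theorem lin_mem (j : Fin 4) {n : ℕ} (hn : 0 < n) (r : Fin 4) : lin j n r ∈ Dg n := by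
  rw [mem_Dg']
  simp only [lin, Finsupp.add_apply, Finset.sum_add_distrib, Finsupp.single_apply]
  simp
  omega

open Classical in
/-- Replace the coefficients at the exponents `lin j n r`. -/
noncomputable def upd {E : Type*} (j : Fin 4) (n : ℕ) (w : (Fin 4 →₀ ℕ) → E)
    (c : Fin 4 → E) (α : Fin 4 →₀ ℕ) : E :=
  if h : ∃ r, α = lin j n r then c h.choose else w α

section
variable {E : Type*} [CommRing E] (j : Fin 4) (n : ℕ) (x : Fin 4 → E) (w : (Fin 4 →₀ ℕ) → E)

theorem upd_lin (c : Fin 4 → E) (r : Fin 4) : upd j n w c (lin j n r) = c r := by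
  have h : ∃ s, lin j n r = lin j n s := ⟨r, rfl⟩
  unfold upd
  rw [dif_pos h]
  exact congrArg c (lin_inj j n h.choose_spec).symm

theorem upd_of_not (c : Fin 4 → E) {α : Fin 4 →₀ ℕ} (h : ¬ ∃ r, α = lin j n r) :
    upd j n w c α = w α := by
  unfold upd
  rw [dif_neg h]

theorem upd_upd (c c' : Fin 4 → E) : upd j n (upd j n w c) c' = upd j n w c' := by
  funext α
  by_cases h : ∃ r, α = lin j n r
  · obtain ⟨r, rfl⟩ := h
    rw [upd_lin, upd_lin]
  · rw [upd_of_not _ _ _ _ h, upd_of_not _ _ _ _ h, upd_of_not _ _ _ _ h]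

theorem upd_self : upd j n w (fun r => w (lin j n r)) = w := by
  funext α
  by_cases h : ∃ r, α = lin j n r
  · obtain ⟨r, rfl⟩ := h
    rw [upd_lin]
  · rw [upd_of_not _ _ _ _ h]

theorem sum_upd (hn : 0 < n) (c : Fin 4 → E) (g : (Fin 4 →₀ ℕ) → E) :
    ∑ α ∈ Dg n, upd j n w c α * g α =
      ∑ α ∈ Dg n, upd j n w (fun _ => 0) α * g α + ∑ r, c r * g (lin j n r) := by
  classical
  have e : ∑ r, c r * g (lin j n r) =
      ∑ α ∈ Dg n, (upd j n w c α - upd j n w (fun _ => 0) α) * g α := by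
    have : ∑ α ∈ Finset.univ.image (lin j n),
        (upd j n w c α - upd j n w (fun _ => 0) α) * g α = ∑ r, c r * g (lin j n r) := by
      rw [Finset.sum_image (fun a _ b _ h => lin_inj j n h)]
      refine Finset.sum_congr rfl fun r _ => ?_
      rw [upd_lin, upd_lin, sub_zero]
    rw [← this]
    apply Finset.sum_subset
    · intro α hα
      obtain ⟨r, -, rfl⟩ := Finset.mem_image.mp hα
      exact lin_mem j hn r
    · intro α _ hα
      have h : ¬ ∃ r, α = lin j n r := by
        rintro ⟨r, rfl⟩
        exact hα (Finset.mem_image_of_mem _ (Finset.mem_univ _))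
      rw [upd_of_not _ _ _ _ h, upd_of_not _ _ _ _ h, sub_self, zero_mul]
  rw [e, ← Finset.sum_add_distrib]
  refine Finset.sum_congr rfl fun α _ => ?_
  ring

theorem mon_add (α β : Fin 4 →₀ ℕ) : mon x (α + β) = mon x α * mon x β := by
  simp [mon, pow_add, Finset.prod_mul_distrib]

theorem mon_single (r : Fin 4) (m : ℕ) : mon x (Finsupp.single r m) = x r ^ m := by
  unfold mon
  rw [Finset.prod_eq_single r]
  · simp
  · intro b _ hb
    rw [Finsupp.single_eq_of_ne hb, pow_zero]
  · simp

theorem FF_upd (hn : 0 < n) (c : Fin 4 → E) :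
    FF n x (upd j n w c) = FF n x (upd j n w (fun _ => 0)) + ∑ r, c r * (x j ^ (n - 1) * x r) := by
  unfold FF
  rw [sum_upd j n w hn c]
  simp only [lin, mon_add, mon_single, pow_one]

theorem GG_upd (hn : 0 < n) (c : Fin 4 → E) (r : Fin 4) (hr : r ≠ j) :
    GG n x (upd j n w c) r = GG n x (upd j n w (fun _ => 0)) r + c r * x j ^ (n - 1) := by
  unfold GG
  simp only [mul_assoc]
  rw [sum_upd j n w hn c]
  congr 1
  rw [Finset.sum_eq_single r]
  · have : lin j n r - Finsupp.single r 1 = Finsupp.single j (n - 1) := by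
      unfold lin
      exact add_tsub_cancel_right _ _
    rw [this, mon_single]
    simp [lin, Finsupp.single_eq_of_ne hr]
  · intro s _ hs
    have : lin j n s r = 0 := by
      simp [lin, Finsupp.single_eq_of_ne hr, Finsupp.single_eq_of_ne hs.symm]
    rw [this]
    simp
  · simp

theorem euler : ∑ r, x r * GG n x w r = (n : E) * FF n x w := by
  unfold GG FF
  simp only [Finset.mul_sum]
  rw [Finset.sum_comm]
  refine Finset.sum_congr rfl fun α hα => ?_
  have h : ∀ r, x r * (w α * (α r : E) * mon x (α - Finsupp.single r 1)) =
      (α r : E) * (w α * mon x α) := by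
    intro r
    by_cases h0 : α r = 0
    · simp [h0]
    · have hle : Finsupp.single r 1 ≤ α := by
        rw [Finsupp.single_le_iff]
        omega
      have : mon x α = mon x (α - Finsupp.single r 1) * x r := by
        conv_lhs => rw [← tsub_add_cancel_of_le hle, mon_add, mon_single, pow_one]
      rw [this]
      ring
  simp only [h]
  rw [← Finset.sum_mul, ← Nat.cast_sum, mem_Dg'.mp hα]

/-- The new coordinates. -/
noncomputable def Phi : (Fin 4 →₀ ℕ) → E :=
  upd j n w (fun r => if r = j then FF n x w else GG n x w r)

/-- Auxiliary coefficients of the inverse coordinate change. -/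
noncomputable def cc (v : E) (r : Fin 4) : E :=
  if r = j then 0 else v ^ (n - 1) * (w (lin j n r) - GG n x (upd j n w (fun _ => 0)) r)

/-- The inverse coordinate change. -/
noncomputable def Psi (v : E) : (Fin 4 →₀ ℕ) → E :=
  upd j n w (fun r => if r = j then v ^ n * (w (lin j n j) - FF n x (upd j n w (cc j n x w v)))
    else cc j n x w v r)

theorem GG_Psi (hn : 0 < n) (v : E) (hv : v * x j = 1) (r : Fin 4) (hr : r ≠ j) :
    GG n x (Psi j n x w v) r = w (lin j n r) := by
  unfold Psi
  rw [GG_upd _ _ _ _ hn _ _ hr, if_neg hr, cc, if_neg hr]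
  have : v ^ (n - 1) * x j ^ (n - 1) = 1 := by rw [← mul_pow, hv, one_pow]
  linear_combination (w (lin j n r) - GG n x (upd j n w (fun _ => 0)) r) * this

theorem split_sum (c : Fin 4 → E) (a : E) (g : Fin 4 → E) (hc : c j = 0) :
    ∑ r, (if r = j then a else c r) * g r = ∑ r, c r * g r + a * g j := by
  have : ∀ r, (if r = j then a else c r) * g r = c r * g r + if r = j then a * g r else 0 := by
    intro r
    split_ifs with h
    · subst h
      rw [hc]
      ring
    · ring
  simp only [this, Finset.sum_add_distrib]
  simp

theorem FF_Psi (hn : 0 < n) (v : E) (hv : v * x j = 1) :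
    FF n x (Psi j n x w v) = w (lin j n j) := by
  unfold Psi
  rw [FF_upd _ _ _ _ hn, split_sum _ _ _ _ (by simp [cc]), ← add_assoc, ← FF_upd _ _ _ _ hn]
  have : v ^ n * (x j ^ (n - 1) * x j) = 1 := by
    rw [← pow_succ, Nat.sub_add_cancel hn, ← mul_pow, hv, one_pow]
  linear_combination (w (lin j n j) - FF n x (upd j n w (cc j n x w v))) * this

theorem Psi_Phi (hn : 0 < n) (v : E) (hv : v * x j = 1) :
    Psi j n x (Phi j n x w) v = w := by
  have h1 : ∀ r, r ≠ j → cc j n x (Phi j n x w) v r = w (lin j n r) := by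
    intro r hr
    have e := GG_upd j n x w hn (fun r => w (lin j n r)) r hr
    rw [upd_self] at e
    rw [cc, if_neg hr, Phi, upd_lin, upd_upd, if_neg hr, e]
    have : v ^ (n - 1) * x j ^ (n - 1) = 1 := by rw [← mul_pow, hv, one_pow]
    linear_combination w (lin j n r) * this
  have h2 : v ^ n * (Phi j n x w (lin j n j) -
      FF n x (upd j n (Phi j n x w) (cc j n x (Phi j n x w) v))) = w (lin j n j) := by
    have e := FF_upd j n x w hn (fun r => if r = j then w (lin j n j) else
      cc j n x (Phi j n x w) v r)
    rw [split_sum _ _ _ _ (by simp [cc]), ← add_assoc, ← FF_upd _ _ _ _ hn] at e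
    have e2 : (fun r => if r = j then w (lin j n j) else
      cc j n x (Phi j n x w) v r) = fun r => w (lin j n r) := by
      funext r
      split_ifs with h
      · rw [h]
      · exact h1 r h
    rw [e2, upd_self] at e
    have e3 : upd j n (Phi j n x w) (cc j n x (Phi j n x w) v) =
        upd j n w (cc j n x (Phi j n x w) v) := by
      conv_lhs => rw [Phi]
      rw [upd_upd]
      rfl
    rw [e3]
    have e4 : Phi j n x w (lin j n j) = FF n x w := by
      rw [Phi, upd_lin, if_pos rfl]
    rw [e4, e]
    have : v ^ n * (x j ^ (n - 1) * x j) = 1 := by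
      rw [← pow_succ, Nat.sub_add_cancel hn, ← mul_pow, hv, one_pow]
    linear_combination w (lin j n j) * this
  unfold Psi
  rw [h2]
  have e2 : (fun r => if r = j then w (lin j n j) else
      cc j n x (Phi j n x w) v r) = fun r => w (lin j n r) := by
    funext r
    split_ifs with h
    · rw [h]
    · exact h1 r h
  rw [e2]
  conv_lhs => rw [Phi]
  rw [upd_upd, upd_self]

variable {E' : Type*} [CommRing E'] (h : E →+* E')

theorem map_mon (α : Fin 4 →₀ ℕ) : h (mon x α) = mon (fun r => h (x r)) α := by
  simp [mon]

theorem map_FF : h (FF n x w) = FF n (fun r => h (x r)) (fun α => h (w α)) := by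
  simp [FF, map_mon]

theorem map_GG (r : Fin 4) : h (GG n x w r) = GG n (fun r => h (x r)) (fun α => h (w α)) r := by
  simp [GG, map_mon]

theorem map_upd (c : Fin 4 → E) :
    (fun α => h (upd j n w c α)) = upd j n (fun α => h (w α)) (fun r => h (c r)) := by
  funext α
  by_cases hh : ∃ r, α = lin j n r
  · obtain ⟨r, rfl⟩ := hh
    rw [upd_lin, upd_lin]
  · rw [upd_of_not _ _ _ _ hh, upd_of_not _ _ _ _ hh]

theorem map_cc (v : E) (r : Fin 4) :
    h (cc j n x w v r) = cc j n (fun r => h (x r)) (fun α => h (w α)) (h v) r := by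
  unfold cc
  split_ifs
  · simp
  · simp [map_GG, map_upd]

theorem map_Psi (v : E) (α : Fin 4 →₀ ℕ) :
    h (Psi j n x w v α) = Psi j n (fun r => h (x r)) (fun α => h (w α)) (h v) α := by
  have := congrFun (map_upd j n w h (fun r => if r = j then v ^ n * (w (lin j n j) -
    FF n x (upd j n w (cc j n x w v))) else cc j n x w v r)) α
  unfold Psi
  rw [this]
  congr 1
  funext r
  split_ifs
  · simp [map_FF, map_upd, map_cc]
  · simp [map_cc]

theorem minors (a b : Fin 4 → E) (v : E) (hv : v * x j = 1) (ha : ∑ r, x r * a r = 0)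
    (hb : ∑ r, x r * b r = 0)
    (hab : ∀ r s, r ≠ j → s ≠ j → a r * b s - a s * b r = 0) (r s : Fin 4) :
    a r * b s - a s * b r = 0 := by
  have key : ∀ s, s ≠ j → a j * b s - a s * b j = 0 := by
    intro s hs
    have e : ∑ r, x r * (a r * b s - a s * b r) = 0 := by
      have : ∑ r, x r * (a r * b s - a s * b r) =
          (∑ r, x r * a r) * b s - a s * ∑ r, x r * b r := by
        rw [Finset.sum_mul, Finset.mul_sum, ← Finset.sum_sub_distrib]
        exact Finset.sum_congr rfl fun r _ => by ring
      rw [this, ha, hb]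
      ring
    rw [Finset.sum_eq_single j (fun r _ hr => by rw [hab r s hr hs, mul_zero]) (by simp)] at e
    linear_combination v * e - (a j * b s - a s * b j) * hv
  by_cases hr : r = j
  · subst hr
    by_cases hs : s = r
    · subst hs
      ring
    · exact key s hs
  · by_cases hs : s = j
    · subst hs
      linear_combination - key r hr
    · exact hab r s hr hs

end

section
variable (k : Type*) [CommRing k] (d : Fin 2 → ℕ)

/-- The coefficient variables, extended by zero. -/
noncomputable def UU (i : Fin 2) (α : Fin 4 →₀ ℕ) : Aring k d :=
  if h : (α.sum fun _ e => e) = d i then X (⟨i, ⟨α, h⟩⟩ : CoefIdx d) else 0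

theorem genF_eq (i : Fin 2) : genF k d i = ∑ α ∈ Dg (d i), monomial α (UU k d i α) := by
  unfold genF Dg
  rw [← Finset.sum_attach (Finset.finsuppAntidiag (Finset.univ : Finset (Fin 4)) (d i))]
  refine Finset.sum_congr rfl fun α _ => ?_
  rw [UU, dif_pos (Finset.mem_finsuppAntidiag'.mp α.2).1]

variable {k d}
variable {E : Type*} [CommRing E]

theorem hom_monomial (h : Cring k d →+* E) (α : Fin 4 →₀ ℕ) (a : Aring k d) :
    h (monomial α a) = h (C a) * mon (fun r => h (X r)) α := by
  rw [monomial_eq, map_mul, Finsupp.prod_fintype _ _ (by simp)]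
  simp [mon]

theorem hom_genF (h : Cring k d →+* E) (i : Fin 2) :
    h (genF k d i) = FF (d i) (fun r => h (X r)) (fun α => h (C (UU k d i α))) := by
  rw [genF_eq, map_sum]
  simp only [hom_monomial, FF]

theorem hom_pderiv (h : Cring k d →+* E) (i : Fin 2) (r : Fin 4) :
    h (pderiv r (genF k d i)) =
      GG (d i) (fun r => h (X r)) (fun α => h (C (UU k d i α))) r := by
  rw [genF_eq, map_sum, map_sum]
  simp only [pderiv_monomial, hom_monomial, GG, map_mul, map_natCast]

/-- Ring homs killing `f₁, f₂` and the minors away from `j` kill the ideal. -/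
theorem FF_congr {n : ℕ} {x : Fin 4 → E} {w w' : (Fin 4 →₀ ℕ) → E}
    (h : ∀ α ∈ Dg n, w α = w' α) : FF n x w = FF n x w' :=
  Finset.sum_congr rfl fun α hα => by rw [h α hα]

theorem GG_congr {n : ℕ} {x : Fin 4 → E} {w w' : (Fin 4 →₀ ℕ) → E} (r : Fin 4)
    (h : ∀ α ∈ Dg n, w α = w' α) : GG n x w r = GG n x w' r :=
  Finset.sum_congr rfl fun α hα => by rw [h α hα]

variable (k d)

/-- The ideal of the generic determinantal ring. -/
noncomputable def I0 (j : Fin 4) : Ideal (Aring k d) :=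
  Ideal.span ({p | ∃ i, p = UU k d i (lin j (d i) j)} ∪
    {p | ∃ r s : Fin 4, r ≠ j ∧ s ≠ j ∧ p = UU k d 0 (lin j (d 0) r) * UU k d 1 (lin j (d 1) s) -
      UU k d 0 (lin j (d 0) s) * UU k d 1 (lin j (d 1) r)})

/-- The polynomial ring over the generic determinantal ring. -/
abbrev Sring (j : Fin 4) : Type _ := MvPolynomial (Fin 4) (Aring k d ⧸ I0 k d j)

/-- Its localization. -/
abbrev Lring (j : Fin 4) : Type _ := Localization.Away (X j : Sring k d j)

/-- The ring `B_{x_j}`. -/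
abbrev Bloc (j : Fin 4) : Type _ :=
  Localization.Away (Ideal.Quotient.mk (Dideal k d) (X j : Cring k d))

variable (j : Fin 4)

/-- Coefficient map into `L`. -/
noncomputable def coefL : Aring k d →+* Lring k d j :=
  ((algebraMap (Sring k d j) (Lring k d j)).comp C).comp (Ideal.Quotient.mk (I0 k d j))

/-- Variables in `L`. -/
noncomputable def xL (r : Fin 4) : Lring k d j := algebraMap (Sring k d j) (Lring k d j) (X r)

/-- Inverse of `x_j` in `L`. -/
noncomputable def vL : Lring k d j := IsLocalization.Away.invSelf (X j : Sring k d j)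

theorem vL_mul : vL k d j * xL k d j j = 1 := by
  rw [mul_comm]
  exact IsLocalization.Away.mul_invSelf (X j : Sring k d j)

/-- New coefficients in `L`. -/
noncomputable def uL (i : Fin 2) : (Fin 4 →₀ ℕ) → Lring k d j :=
  Psi j (d i) (xL k d j) (fun α => coefL k d j (UU k d i α)) (vL k d j)

/-- The map `C → L`. -/
noncomputable def theta0 : Cring k d →+* Lring k d j :=
  eval₂Hom (eval₂Hom ((coefL k d j).comp C) (fun c : CoefIdx d => uL k d j c.1 c.2.1)) (xL k d j)

theorem theta0_X (r : Fin 4) : theta0 k d j (X r) = xL k d j r := by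
  simp [theta0]

theorem theta0_U (i : Fin 2) (α : Fin 4 →₀ ℕ) (hα : α ∈ Dg (d i)) :
    theta0 k d j (C (UU k d i α)) = uL k d j i α := by
  rw [UU, dif_pos (mem_Dg.mp hα), theta0, eval₂Hom_C]
  exact eval₂Hom_X' _ _ _

theorem theta0_genF (hd : ∀ i, 0 < d i) (i : Fin 2) : theta0 k d j (genF k d i) = 0 := by
  rw [hom_genF, FF_congr (theta0_U k d j i)]
  simp only [theta0_X]
  refine (FF_Psi j (d i) (xL k d j) _ (hd i) _ (vL_mul k d j)).trans ?_
  have : UU k d i (lin j (d i) j) ∈ I0 k d j := Ideal.subset_span (Or.inl ⟨i, rfl⟩)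
  simp [coefL, Ideal.Quotient.eq_zero_iff_mem.mpr this]

theorem theta0_pderiv (hd : ∀ i, 0 < d i) (i : Fin 2) (r : Fin 4) (hr : r ≠ j) :
    theta0 k d j (pderiv r (genF k d i)) = coefL k d j (UU k d i (lin j (d i) r)) := by
  rw [hom_pderiv, GG_congr r (theta0_U k d j i)]
  simp only [theta0_X]
  exact GG_Psi j (d i) (xL k d j) _ (hd i) _ (vL_mul k d j) r hr

theorem theta0_euler (hd : ∀ i, 0 < d i) (i : Fin 2) :
    ∑ r, xL k d j r * theta0 k d j (pderiv r (genF k d i)) = 0 := by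
  have h := euler (d i) (fun r => theta0 k d j (X r)) (fun α => theta0 k d j (C (UU k d i α)))
  rw [← hom_genF, theta0_genF k d j hd, mul_zero] at h
  rw [← h]
  refine Finset.sum_congr rfl fun r _ => ?_
  rw [hom_pderiv, theta0_X]

theorem theta0_Jmin (hd : ∀ i, 0 < d i) (r s : Fin 4) : theta0 k d j (Jmin k d r s) = 0 := by
  rw [Jmin, map_sub, map_mul, map_mul]
  refine minors j (xL k d j) (fun r => theta0 k d j (pderiv r (genF k d 0)))
    (fun r => theta0 k d j (pderiv r (genF k d 1))) (vL k d j) (vL_mul k d j)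
    (theta0_euler k d j hd 0) (theta0_euler k d j hd 1) ?_ r s
  intro r s hr hs
  simp only [theta0_pderiv k d j hd _ _ hr, theta0_pderiv k d j hd _ _ hs]
  rw [← map_mul, ← map_mul, ← map_sub]
  have : UU k d 0 (lin j (d 0) r) * UU k d 1 (lin j (d 1) s) -
      UU k d 0 (lin j (d 0) s) * UU k d 1 (lin j (d 1) r) ∈ I0 k d j :=
    Ideal.subset_span (Or.inr ⟨r, s, hr, hs, rfl⟩)
  rw [coefL, RingHom.comp_apply, Ideal.Quotient.eq_zero_iff_mem.mpr this, map_zero]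

theorem theta0_D (hd : ∀ i, 0 < d i) (a : Cring k d) (ha : a ∈ Dideal k d) :
    theta0 k d j a = 0 := by
  have : Dideal k d ≤ RingHom.ker (theta0 k d j) := by
    rw [Dideal, Ideal.span_le]
    rintro p ((rfl | rfl) | ⟨r, s, -, rfl⟩)
    · exact theta0_genF k d j hd 0
    · exact theta0_genF k d j hd 1
    · exact theta0_Jmin k d j hd r s
  exact this ha

/-- The map `B_{x_j} → L`. -/
noncomputable def Theta (hd : ∀ i, 0 < d i) : Bloc k d j →+* Lring k d j :=
  IsLocalization.Away.lift (Ideal.Quotient.mk (Dideal k d) (X j : Cring k d))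
    (g := Ideal.Quotient.lift (Dideal k d) (theta0 k d j) (theta0_D k d j hd))
    (by
      rw [Ideal.Quotient.lift_mk, theta0_X]
      exact IsUnit.of_mul_eq_one_right _ (vL_mul k d j))

/-- The map `C → B_{x_j}`. -/
noncomputable def toB : Cring k d →+* Bloc k d j :=
  (algebraMap (Cring k d ⧸ Dideal k d) (Bloc k d j)).comp (Ideal.Quotient.mk (Dideal k d))

theorem Theta_toB (hd : ∀ i, 0 < d i) (g : Cring k d) :
    Theta k d j hd (toB k d j g) = theta0 k d j g := by
  rw [Theta, toB, RingHom.comp_apply, IsLocalization.Away.lift_eq, Ideal.Quotient.lift_mk]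

theorem toB_D (g : Cring k d) (hg : g ∈ Dideal k d) : toB k d j g = 0 := by
  rw [toB, RingHom.comp_apply, Ideal.Quotient.eq_zero_iff_mem.mpr hg, map_zero]

theorem toB_genF (i : Fin 2) : toB k d j (genF k d i) = 0 := by
  apply toB_D
  apply Ideal.subset_span
  left
  fin_cases i
  · exact Or.inl rfl
  · exact Or.inr rfl

theorem toB_Jmin (r s : Fin 4) : toB k d j (Jmin k d r s) = 0 := by
  apply toB_D
  rcases lt_trichotomy r s with h | h | h
  · exact Ideal.subset_span (Or.inr ⟨r, s, h, rfl⟩)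
  · subst h
    have : Jmin k d r r = 0 := by
      unfold Jmin
      ring
    rw [this]
    exact zero_mem _
  · have : Jmin k d r s = - Jmin k d s r := by
      unfold Jmin
      ring
    rw [this]
    exact neg_mem (Ideal.subset_span (Or.inr ⟨s, r, h, rfl⟩))

/-- New coordinates in `B_{x_j}`. -/
noncomputable def phiB (i : Fin 2) : (Fin 4 →₀ ℕ) → Bloc k d j :=
  Phi j (d i) (fun r => toB k d j (X r)) (fun α => toB k d j (C (UU k d i α)))

/-- Coefficient map of `eta`. -/
noncomputable def eta00 : Aring k d →+* Bloc k d j :=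
  eval₂Hom (((toB k d j).comp C).comp C) (fun c : CoefIdx d => phiB k d j c.1 c.2.1)

theorem eta00_U (hd : ∀ i, 0 < d i) (i : Fin 2) (α : Fin 4 →₀ ℕ) :
    eta00 k d j (UU k d i α) = phiB k d j i α := by
  by_cases h : (α.sum fun _ e => e) = d i
  · rw [UU, dif_pos h]
    exact eval₂Hom_X' _ _ _
  · have h' : ¬ ∃ r, α = lin j (d i) r := by
      rintro ⟨r, rfl⟩
      exact h (mem_Dg.mp (lin_mem j (hd i) r))
    rw [phiB, Phi, upd_of_not _ _ _ _ h', UU, dif_neg h]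
    simp

theorem phiB_lin_self (i : Fin 2) : phiB k d j i (lin j (d i) j) = 0 := by
  rw [phiB, Phi, upd_lin, if_pos rfl, ← hom_genF, toB_genF]

theorem phiB_lin (i : Fin 2) (r : Fin 4) (hr : r ≠ j) :
    phiB k d j i (lin j (d i) r) = toB k d j (pderiv r (genF k d i)) := by
  rw [phiB, Phi, upd_lin, if_neg hr, ← hom_pderiv]

theorem eta00_I (hd : ∀ i, 0 < d i) (a : Aring k d) (ha : a ∈ I0 k d j) :
    eta00 k d j a = 0 := by
  have : I0 k d j ≤ RingHom.ker (eta00 k d j) := by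
    rw [I0, Ideal.span_le]
    rintro p (⟨i, rfl⟩ | ⟨r, s, hr, hs, rfl⟩)
    · exact (eta00_U k d j hd _ _).trans (phiB_lin_self k d j i)
    · change eta00 k d j _ = 0
      rw [map_sub, map_mul, map_mul]
      simp only [eta00_U k d j hd, phiB_lin k d j _ _ hr, phiB_lin k d j _ _ hs]
      rw [← map_mul, ← map_mul, ← map_sub]
      exact toB_Jmin k d j r s
  exact this ha

/-- The map `S → B_{x_j}`. -/
noncomputable def eta0 (hd : ∀ i, 0 < d i) : Sring k d j →+* Bloc k d j :=
  eval₂Hom (Ideal.Quotient.lift (I0 k d j) (eta00 k d j) (eta00_I k d j hd))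
    (fun r => toB k d j (X r))

/-- The map `L → B_{x_j}`. -/
noncomputable def Eta (hd : ∀ i, 0 < d i) : Lring k d j →+* Bloc k d j :=
  IsLocalization.Away.lift (X j : Sring k d j) (g := eta0 k d j hd)
    (by
      rw [eta0, eval₂Hom_X']
      exact IsLocalization.Away.algebraMap_isUnit
        (Ideal.Quotient.mk (Dideal k d) (X j : Cring k d)))

theorem Eta_xL (hd : ∀ i, 0 < d i) (r : Fin 4) :
    Eta k d j hd (xL k d j r) = toB k d j (X r) := by
  rw [Eta, xL, IsLocalization.Away.lift_eq, eta0, eval₂Hom_X']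

theorem Eta_coefL (hd : ∀ i, 0 < d i) (a : Aring k d) :
    Eta k d j hd (coefL k d j a) = eta00 k d j a := by
  rw [Eta, coefL, RingHom.comp_apply, RingHom.comp_apply, IsLocalization.Away.lift_eq, eta0,
    eval₂Hom_C, Ideal.Quotient.lift_mk]

theorem Eta_uL (hd : ∀ i, 0 < d i) (i : Fin 2) (α : Fin 4 →₀ ℕ) :
    Eta k d j hd (uL k d j i α) = toB k d j (C (UU k d i α)) := by
  rw [uL, map_Psi]
  simp only [Eta_xL, Eta_coefL, eta00_U k d j hd]
  have hv : Eta k d j hd (vL k d j) * toB k d j (X j) = 1 := by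
    rw [← Eta_xL k d j hd, ← map_mul, vL_mul, map_one]
  exact congrFun (Psi_Phi j (d i) (fun r => toB k d j (X r))
    (fun α => toB k d j (C (UU k d i α))) (hd i) _ hv) α

theorem Eta_theta0 (hd : ∀ i, 0 < d i) : (Eta k d j hd).comp (theta0 k d j) = toB k d j := by
  apply MvPolynomial.ringHom_ext'
  · apply MvPolynomial.ringHom_ext'
    · ext a
      simp only [RingHom.comp_apply, theta0, eval₂Hom_C, Eta_coefL, eta00]
    · rintro ⟨i, α, hα⟩
      have e : (X (⟨i, ⟨α, hα⟩⟩ : CoefIdx d) : Aring k d) = UU k d i α := by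
        rw [UU, dif_pos hα]
      have e' := Eta_uL k d j hd i α
      rw [← theta0_U k d j i α (mem_Dg.mpr hα), ← e] at e'
      exact e'
  · intro r
    rw [RingHom.comp_apply, theta0_X, Eta_xL]

theorem Eta_Theta (hd : ∀ i, 0 < d i) (b : Bloc k d j) :
    Eta k d j hd (Theta k d j hd b) = b := by
  have : (Eta k d j hd).comp (Theta k d j hd) = RingHom.id _ := by
    apply IsLocalization.ringHom_ext
      (Submonoid.powers (Ideal.Quotient.mk (Dideal k d) (X j : Cring k d)))
    apply Ideal.Quotient.ringHom_ext
    refine RingHom.ext fun g => ?_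
    exact (congrArg (Eta k d j hd) (Theta_toB k d j hd _)).trans
        (congrFun (congrArg DFunLike.coe (Eta_theta0 k d j hd)) g)
  exact congrFun (congrArg DFunLike.coe this) b

theorem X_nzd {R : Type*} [CommRing R] (i : Fin 4) :
    (X i : MvPolynomial (Fin 4) R) ∈ nonZeroDivisors (MvPolynomial (Fin 4) R) := by
  rw [mem_nonZeroDivisors_iff_right]
  intro p hp
  ext m
  have h := congrArg (coeff (m + Finsupp.single i 1)) hp
  rw [coeff_mul_X] at h
  simpa using h

theorem xL_mem (i : Fin 4) : xL k d j i ∈ nonZeroDivisors (Lring k d j) := by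
  have h : (X i : Sring k d j) ∈ nonZeroDivisors (Sring k d j) :=
    X_nzd i
  exact IsLocalization.map_nonZeroDivisors_le (Submonoid.powers (X j : Sring k d j)) _
    (Submonoid.mem_map_of_mem _ h)

theorem toB_X_mem (hd : ∀ i, 0 < d i) (i : Fin 4) :
    toB k d j (X i) ∈ nonZeroDivisors (Bloc k d j) := by
  rw [mem_nonZeroDivisors_iff_right]
  intro b hb
  have h := congrArg (Theta k d j hd) hb
  rw [map_mul, Theta_toB, theta0_X, map_zero] at h
  have h2 := (mem_nonZeroDivisors_iff_right.mp (xL_mem k d j i)) _ h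
  rw [← Eta_Theta k d j hd b, h2, map_zero]

end

end XNZD

/-- **Lemma.** If `k` is a domain then for all `i ≠ j`, the image of `x_i` in the
localization `B_{x_j}` of `B = C/𝒟` is a nonzerodivisor; consequently the canonical map
`B_{x_j} → B_{x_i x_j}` (localizing `B_{x_j}` further at the image of `x_i`) is injective. -/
theorem X_nonZeroDivisor_in_B_localization (k : Type*) [CommRing k] [IsDomain k]
    (d : Fin 2 → ℕ) (hd : ∀ i, 0 < d i) (i j : Fin 4) (hij : i ≠ j) :
    (algebraMap (Cring k d ⧸ Dideal k d)
        (Localization.Away (Ideal.Quotient.mk (Dideal k d) (X j : Cring k d)))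
        (Ideal.Quotient.mk (Dideal k d) (X i : Cring k d))) ∈
      nonZeroDivisors
        (Localization.Away (Ideal.Quotient.mk (Dideal k d) (X j : Cring k d))) ∧
    Function.Injective
      (algebraMap
        (Localization.Away (Ideal.Quotient.mk (Dideal k d) (X j : Cring k d)))
        (Localization.Away
          (algebraMap (Cring k d ⧸ Dideal k d)
            (Localization.Away (Ideal.Quotient.mk (Dideal k d) (X j : Cring k d)))
            (Ideal.Quotient.mk (Dideal k d) (X i : Cring k d))))) := by
  have h := XNZD.toB_X_mem k d j hd i
  refine ⟨h, ?_⟩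
  apply IsLocalization.injective _ (M := Submonoid.powers
    (algebraMap (Cring k d ⧸ Dideal k d)
      (Localization.Away (Ideal.Quotient.mk (Dideal k d) (X j : Cring k d)))
      (Ideal.Quotient.mk (Dideal k d) (X i : Cring k d))))
  rw [Submonoid.powers_le]
  exact h
end

section
/- For each i ∈ {1,2,3,4}, the extension of the ideal 𝒟 = (f₁, f₂, J_{1,2}, J_{1,3}, J_{1,4}, J_{2,3}, J_{2,4}, J_{3,4}) to the localization C_{x_i} coincides with the extension of the ideal generated by f₁, f₂ and the three minors J_{r,s} with r < s and r, s ∈ {1,2,3,4}\{i}. -/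
set_option maxSynthPendingDepth 3

open MvPolynomial

lemma genF_homog (k : Type*) [CommRing k] (d : Fin 2 → ℕ) (j : Fin 2) :
    (genF k d j).IsHomogeneous (d j) := by
  unfold genF
  refine IsHomogeneous.sum _ _ _ fun α _ => isHomogeneous_monomial _ ?_
  have h := (Finset.mem_finsuppAntidiag'.mp α.2).1
  exact h

lemma genF_euler (k : Type*) [CommRing k] (d : Fin 2 → ℕ) (j : Fin 2) :
    ∑ r : Fin 4, X r * pderiv r (genF k d j) = (d j) • genF k d j :=
  (genF_homog k d j).sum_X_mul_pderiv

lemma Jmin_swap (k : Type*) [CommRing k] (d : Fin 2 → ℕ) (r s : Fin 4) :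
    Jmin k d r s = - Jmin k d s r := by
  unfold Jmin; ring

lemma sum_X_mul_Jmin (k : Type*) [CommRing k] (d : Fin 2 → ℕ) (s : Fin 4) :
    ∑ r : Fin 4, X r * Jmin k d r s =
      (d 0 • pderiv s (genF k d 1)) * genF k d 0 - (d 1 • pderiv s (genF k d 0)) * genF k d 1 := by
  have h0 := genF_euler k d 0
  have h1 := genF_euler k d 1
  have : ∑ r : Fin 4, X r * Jmin k d r s =
      (∑ r : Fin 4, X r * pderiv r (genF k d 0)) * pderiv s (genF k d 1) -
      (∑ r : Fin 4, X r * pderiv r (genF k d 1)) * pderiv s (genF k d 0) := by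
    rw [Finset.sum_mul, Finset.sum_mul, ← Finset.sum_sub_distrib]
    refine Finset.sum_congr rfl fun r _ => ?_
    unfold Jmin; ring
  rw [this, h0, h1]
  simp only [nsmul_eq_mul]; ring

/-- **Lemma.** For each `i`, the extension of
`𝒟 = (f₁, f₂, J_{r,s} : r < s)` to the localization `C_{x_i}` coincides with the extension
of the ideal generated by `f₁, f₂` and the three minors `J_{r,s}` with `r < s`,
`r ≠ i`, `s ≠ i`. -/
theorem Dideal_localization_eq (k : Type*) [CommRing k] (d : Fin 2 → ℕ)
    (hd : ∀ i, 0 < d i) (i : Fin 4) :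
    (Dideal k d).map
        (algebraMap (Cring k d) (Localization.Away (X i : Cring k d)))
      = (Ideal.span ({genF k d 0, genF k d 1} ∪
          {p | ∃ r s : Fin 4, r < s ∧ r ≠ i ∧ s ≠ i ∧ p = Jmin k d r s})).map
        (algebraMap (Cring k d) (Localization.Away (X i : Cring k d))) := by
  set S : Set (Cring k d) := {genF k d 0, genF k d 1} ∪
          {p | ∃ r s : Fin 4, r < s ∧ r ≠ i ∧ s ≠ i ∧ p = Jmin k d r s} with hS
  have hf0 : genF k d 0 ∈ Ideal.span S := Ideal.subset_span (Or.inl (Or.inl rfl))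
  have hf1 : genF k d 1 ∈ Ideal.span S := Ideal.subset_span (Or.inl (Or.inr rfl))
  have hJ : ∀ r s, r ≠ i → s ≠ i → Jmin k d r s ∈ Ideal.span S := by
    intro r s hr hs
    rcases lt_trichotomy r s with h | h | h
    · exact Ideal.subset_span (Or.inr ⟨r, s, h, hr, hs, rfl⟩)
    · subst h
      have : Jmin k d r r = 0 := by unfold Jmin; ring
      rw [this]; exact zero_mem _
    · rw [Jmin_swap]
      exact neg_mem (Ideal.subset_span (Or.inr ⟨s, r, h, hs, hr, rfl⟩))
  have hXi : ∀ s, s ≠ i → X i * Jmin k d i s ∈ Ideal.span S := by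
    intro s hs
    have h := sum_X_mul_Jmin k d s
    rw [← Finset.add_sum_erase _ _ (Finset.mem_univ i)] at h
    rw [eq_sub_of_add_eq h]
    refine sub_mem (sub_mem (Ideal.mul_mem_left _ _ hf0) (Ideal.mul_mem_left _ _ hf1)) ?_
    exact sum_mem fun r hr => Ideal.mul_mem_left _ _ (hJ r s (Finset.ne_of_mem_erase hr) hs)
  have hu : IsUnit (algebraMap (Cring k d) (Localization.Away (X i : Cring k d)) (X i)) :=
    IsLocalization.Away.algebraMap_isUnit _
  have hloc : ∀ s, s ≠ i → algebraMap (Cring k d) (Localization.Away (X i : Cring k d))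
      (Jmin k d i s) ∈ (Ideal.span S).map
        (algebraMap (Cring k d) (Localization.Away (X i : Cring k d))) := by
    intro s hs
    have h := Ideal.mem_map_of_mem
      (algebraMap (Cring k d) (Localization.Away (X i : Cring k d))) (hXi s hs)
    rw [map_mul] at h
    exact (Ideal.unit_mul_mem_iff_mem _ hu).mp h
  apply le_antisymm
  · rw [Dideal, Ideal.map_span, Ideal.span_le]
    rintro _ ⟨p, hp | ⟨r, s, hrs, rfl⟩, rfl⟩
    · exact Ideal.mem_map_of_mem _ (Ideal.subset_span (Or.inl hp))
    · by_cases hr : r = i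
      · subst hr
        exact hloc s hrs.ne'
      · by_cases hs : s = i
        · subst hs
          rw [Jmin_swap, map_neg]
          exact neg_mem (hloc r hr)
        · exact Ideal.mem_map_of_mem _ (hJ r s hr hs)
  · refine Ideal.map_mono (Ideal.span_mono ?_)
    rintro p (hp | ⟨r, s, hrs, _, _, rfl⟩)
    · exact Or.inl hp
    · exact Or.inr ⟨r, s, hrs, rfl⟩
end
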